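/- Let g > 0 and let ζ: ℝ² → ℝ be C² with ζ(x,y) ≥ m for all (x,y) and |∇ζ(x,y)| ≤ M for all (x,y). Let (x(t), y(t)) be a C² solution of the steady John–Sclavounos equations on an interval J containing 0, with initial position x₀ = (x(0), y(0)) and initial velocity u₀ = (ẋ(0), ẏ(0)), and let H₀ = g ζ(x₀) + ½|u₀|² + ½(u₀·∇ζ(x₀))². Then for every t ∈ J, ẋ(t)² + ẏ(t)² ≤ 2(1 + M²)(H₀ − g m). In particular the particle velocity remains bounded for all time and no finite-time blowup of the velocity can occur. -/

import Mathlib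

/-!
The John–Sclavounos equations describe a particle sliding without friction on the surface
`z = ζ(x, y)`. Writing `z̈` for its vertical acceleration, they read
`ẍ = -(g + z̈) ζ_x` and `ÿ = -(g + z̈) ζ_y`: the reaction of the surface is normal to it.
Since `ż = ẋ ζ_x + ẏ ζ_y`, the energy `g z + ½(ẋ² + ẏ² + ż²)` has time derivative
`g ż + ẋ ẍ + ẏ ÿ + ż z̈ = 0`. A lower bound on the potential energy therefore bounds the kinetic
energy, of which `½(ẋ² + ẏ²)` is a part.
-/

noncomputable section

/-- Partial derivative of `ζ(x,y)` with respect to `x`. -/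
def dx (ζ : ℝ × ℝ → ℝ) (p : ℝ × ℝ) : ℝ := fderiv ℝ ζ p (1, 0)

/-- Partial derivative of `ζ(x,y)` with respect to `y`. -/
def dy (ζ : ℝ × ℝ → ℝ) (p : ℝ × ℝ) : ℝ := fderiv ℝ ζ p (0, 1)

def dxx (ζ : ℝ × ℝ → ℝ) (p : ℝ × ℝ) : ℝ := fderiv ℝ (dx ζ) p (1, 0)
def dxy (ζ : ℝ × ℝ → ℝ) (p : ℝ × ℝ) : ℝ := fderiv ℝ (dx ζ) p (0, 1)
def dyy (ζ : ℝ × ℝ → ℝ) (p : ℝ × ℝ) : ℝ := fderiv ℝ (dy ζ) p (0, 1)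

/-- The steady John–Sclavounos equations for a horizontal trajectory `(x(t), y(t))` on
the time-independent surface `z = ζ(x,y)`, at time `t`, with gravity `g`:
`(1+ζ_x²)ẍ + ζ_xζ_y ÿ + Q ζ_x = 0` and `(1+ζ_y²)ÿ + ζ_xζ_y ẍ + Q ζ_y = 0`, where
`Q = ζ_xx ẋ² + 2ζ_xy ẋẏ + ζ_yy ẏ² + g`. -/
def SteadyJSEq (g : ℝ) (ζ : ℝ × ℝ → ℝ) (x y : ℝ → ℝ) (t : ℝ) : Prop :=
  (1 + dx ζ (x t, y t) ^ 2) * deriv (deriv x) t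
      + dx ζ (x t, y t) * dy ζ (x t, y t) * deriv (deriv y) t
      + (dxx ζ (x t, y t) * (deriv x t) ^ 2
          + 2 * dxy ζ (x t, y t) * deriv x t * deriv y t
          + dyy ζ (x t, y t) * (deriv y t) ^ 2 + g) * dx ζ (x t, y t) = 0
  ∧ (1 + dy ζ (x t, y t) ^ 2) * deriv (deriv y) t
      + dx ζ (x t, y t) * dy ζ (x t, y t) * deriv (deriv x) t
      + (dxx ζ (x t, y t) * (deriv x t) ^ 2
          + 2 * dxy ζ (x t, y t) * deriv x t * deriv y t
          + dyy ζ (x t, y t) * (deriv y t) ^ 2 + g) * dy ζ (x t, y t) = 0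

section SecondDerivative

variable {𝕜 E F : Type*} [NontriviallyNormedField 𝕜] [NormedAddCommGroup E] [NormedSpace 𝕜 E]
  [NormedAddCommGroup F] [NormedSpace 𝕜 F] {f : E → F} {p : E}

theorem fderiv_fderiv_apply (hf : DifferentiableAt 𝕜 (fderiv 𝕜 f) p) (v w : E) :
    fderiv 𝕜 (fun q => fderiv 𝕜 f q v) p w = fderiv 𝕜 (fderiv 𝕜 f) p w v := by
  simp [fderiv_clm_apply hf (differentiableAt_const v)]

theorem differentiableAt_fderiv_of_contDiffAt_two (hf : ContDiffAt 𝕜 2 f p) :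
    DifferentiableAt 𝕜 (fderiv 𝕜 f) p :=
  (hf.fderiv_right (m := 1) (by norm_num)).differentiableAt one_ne_zero

end SecondDerivative

theorem differentiableAt_deriv_of_contDiffAt_two {𝕜 F : Type*} [NontriviallyNormedField 𝕜]
    [NormedAddCommGroup F] [NormedSpace 𝕜 F] {f : 𝕜 → F} {t : 𝕜} (hf : ContDiffAt 𝕜 2 f t) :
    DifferentiableAt 𝕜 (deriv f) t :=
  (differentiableAt_fderiv_of_contDiffAt_two hf).clm_apply (differentiableAt_const 1)

theorem eq_of_hasDerivWithinAt_zero {F : Type*} [NormedAddCommGroup F] [NormedSpace ℝ F]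
    {f : ℝ → F} {J : Set ℝ} (hJ : J.OrdConnected) (hf : ∀ t ∈ J, HasDerivWithinAt f 0 J t)
    {s t : ℝ} (hs : s ∈ J) (ht : t ∈ J) : f t = f s := by
  have hbound : ‖f t - f s‖ ≤ 0 * ‖t - s‖ :=
    hJ.convex.norm_image_sub_le_of_norm_hasDerivWithin_le hf (fun _ _ => norm_zero.le) hs ht
  rwa [zero_mul, norm_le_zero_iff, sub_eq_zero] at hbound

section PartialDerivatives

variable {f : ℝ × ℝ → ℝ} {p : ℝ × ℝ}

theorem differentiableAt_dx (hf : ContDiffAt ℝ 2 f p) : DifferentiableAt ℝ (dx f) p :=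
  (differentiableAt_fderiv_of_contDiffAt_two hf).clm_apply (differentiableAt_const _)

theorem differentiableAt_dy (hf : ContDiffAt ℝ 2 f p) : DifferentiableAt ℝ (dy f) p :=
  (differentiableAt_fderiv_of_contDiffAt_two hf).clm_apply (differentiableAt_const _)

theorem dx_dy_eq_dxy (hf : ContDiffAt ℝ 2 f p) : dx (dy f) p = dxy f p := by
  have hf' := differentiableAt_fderiv_of_contDiffAt_two hf
  calc dx (dy f) p = fderiv ℝ (fderiv ℝ f) p (1, 0) (0, 1) := fderiv_fderiv_apply hf' _ _
    _ = fderiv ℝ (fderiv ℝ f) p (0, 1) (1, 0) := hf.isSymmSndFDerivAt (by simp) _ _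
    _ = dxy f p := (fderiv_fderiv_apply hf' _ _).symm

theorem hasDerivAt_comp_curve {x y : ℝ → ℝ} {x' y' t : ℝ}
    (hf : DifferentiableAt ℝ f (x t, y t)) (hx : HasDerivAt x x' t) (hy : HasDerivAt y y' t) :
    HasDerivAt (fun s => f (x s, y s)) (x' * dx f (x t, y t) + y' * dy f (x t, y t)) t := by
  refine (hf.hasFDerivAt.comp_hasDerivAt t (hx.prodMk hy)).congr_deriv ?_
  have hsplit : (x', y') = x' • ((1, 0) : ℝ × ℝ) + y' • ((0, 1) : ℝ × ℝ) := by simp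
  rw [hsplit, map_add, map_smul, map_smul]
  rfl

end PartialDerivatives

/-- The vertical velocity `ż = ẋ ζ_x + ẏ ζ_y` of a particle moving on the surface `z = ζ(x, y)`,
in terms of its horizontal trajectory. -/
def verticalVelocity (ζ : ℝ × ℝ → ℝ) (x y : ℝ → ℝ) (t : ℝ) : ℝ :=
  deriv x t * dx ζ (x t, y t) + deriv y t * dy ζ (x t, y t)

/-- The vertical acceleration `z̈` of a particle moving on the surface `z = ζ(x, y)`, expanded by
the chain rule; the quantity `Q` of the John–Sclavounos equations collects `g` and the terms that
are quadratic in the velocity. -/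
def verticalAcceleration (ζ : ℝ × ℝ → ℝ) (x y : ℝ → ℝ) (t : ℝ) : ℝ :=
  deriv (deriv x) t * dx ζ (x t, y t) + deriv (deriv y) t * dy ζ (x t, y t)
    + (dxx ζ (x t, y t) * (deriv x t) ^ 2 + 2 * dxy ζ (x t, y t) * deriv x t * deriv y t
      + dyy ζ (x t, y t) * (deriv y t) ^ 2)

/-- The Hamiltonian `g ζ + ½|u|² + ½(u·∇ζ)²` along a horizontal trajectory: the energy per unit
mass of a particle moving on the surface. -/
def energy (g : ℝ) (ζ : ℝ × ℝ → ℝ) (x y : ℝ → ℝ) (t : ℝ) : ℝ :=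
  g * ζ (x t, y t) + (1 / 2) * ((deriv x t) ^ 2 + (deriv y t) ^ 2)
    + (1 / 2) * verticalVelocity ζ x y t ^ 2

section Trajectory

variable {g : ℝ} {ζ : ℝ × ℝ → ℝ} {x y : ℝ → ℝ} {t : ℝ}

theorem hasDerivAt_height (hζ : DifferentiableAt ℝ ζ (x t, y t)) (hx : DifferentiableAt ℝ x t)
    (hy : DifferentiableAt ℝ y t) :
    HasDerivAt (fun s => ζ (x s, y s)) (verticalVelocity ζ x y t) t :=
  hasDerivAt_comp_curve hζ hx.hasDerivAt hy.hasDerivAt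

theorem hasDerivAt_verticalVelocity (hζ : ContDiffAt ℝ 2 ζ (x t, y t)) (hx : ContDiffAt ℝ 2 x t)
    (hy : ContDiffAt ℝ 2 y t) :
    HasDerivAt (verticalVelocity ζ x y) (verticalAcceleration ζ x y t) t := by
  have hx₁ := (hx.differentiableAt two_ne_zero).hasDerivAt
  have hy₁ := (hy.differentiableAt two_ne_zero).hasDerivAt
  have hx₂ := (differentiableAt_deriv_of_contDiffAt_two hx).hasDerivAt
  have hy₂ := (differentiableAt_deriv_of_contDiffAt_two hy).hasDerivAt
  have hζx : HasDerivAt (fun s => dx ζ (x s, y s))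
      (deriv x t * dxx ζ (x t, y t) + deriv y t * dxy ζ (x t, y t)) t :=
    hasDerivAt_comp_curve (differentiableAt_dx hζ) hx₁ hy₁
  have hζy : HasDerivAt (fun s => dy ζ (x s, y s))
      (deriv x t * dxy ζ (x t, y t) + deriv y t * dyy ζ (x t, y t)) t := by
    rw [← dx_dy_eq_dxy hζ]
    exact hasDerivAt_comp_curve (differentiableAt_dy hζ) hx₁ hy₁
  refine ((hx₂.mul hζx).add (hy₂.mul hζy)).congr_deriv ?_
  unfold verticalAcceleration
  ring

theorem steadyJSEq_iff_acceleration_eq :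
    SteadyJSEq g ζ x y t ↔
      deriv (deriv x) t = -(g + verticalAcceleration ζ x y t) * dx ζ (x t, y t) ∧
      deriv (deriv y) t = -(g + verticalAcceleration ζ x y t) * dy ζ (x t, y t) := by
  unfold SteadyJSEq verticalAcceleration
  exact ⟨fun ⟨h₁, h₂⟩ => ⟨by linear_combination h₁, by linear_combination h₂⟩,
    fun ⟨h₁, h₂⟩ => ⟨by linear_combination h₁, by linear_combination h₂⟩⟩

theorem hasDerivAt_energy (hζ : ContDiffAt ℝ 2 ζ (x t, y t)) (hx : ContDiffAt ℝ 2 x t)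
    (hy : ContDiffAt ℝ 2 y t) :
    HasDerivAt (energy g ζ x y)
      (g * verticalVelocity ζ x y t
        + (deriv x t * deriv (deriv x) t + deriv y t * deriv (deriv y) t)
        + verticalVelocity ζ x y t * verticalAcceleration ζ x y t) t := by
  have hz := hasDerivAt_height (hζ.differentiableAt two_ne_zero)
    (hx.differentiableAt two_ne_zero) (hy.differentiableAt two_ne_zero)
  have hx₂ := (differentiableAt_deriv_of_contDiffAt_two hx).hasDerivAt
  have hy₂ := (differentiableAt_deriv_of_contDiffAt_two hy).hasDerivAt
  have hw := hasDerivAt_verticalVelocity hζ hx hy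
  refine (((hz.const_mul g).add (((hx₂.pow 2).add (hy₂.pow 2)).const_mul (1 / 2))).add
    ((hw.pow 2).const_mul (1 / 2))).congr_deriv ?_
  push_cast
  ring

theorem SteadyJSEq.hasDerivAt_energy_zero (h : SteadyJSEq g ζ x y t)
    (hζ : ContDiffAt ℝ 2 ζ (x t, y t)) (hx : ContDiffAt ℝ 2 x t) (hy : ContDiffAt ℝ 2 y t) :
    HasDerivAt (energy g ζ x y) 0 t := by
  obtain ⟨hx₂, hy₂⟩ := steadyJSEq_iff_acceleration_eq.mp h
  refine (hasDerivAt_energy hζ hx hy).congr_deriv ?_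
  rw [hx₂, hy₂]
  unfold verticalVelocity
  ring

theorem horizontal_speed_sq_le_two_mul_energy_sub :
    (deriv x t) ^ 2 + (deriv y t) ^ 2 ≤ 2 * (energy g ζ x y t - g * ζ (x t, y t)) := by
  unfold energy
  linarith [sq_nonneg (verticalVelocity ζ x y t)]

end Trajectory

theorem energy_eq_of_steadyJSEq {g : ℝ} {ζ : ℝ × ℝ → ℝ} {x y : ℝ → ℝ} {J : Set ℝ}
    (hJ : J.OrdConnected) (hζ : ∀ t ∈ J, ContDiffAt ℝ 2 ζ (x t, y t))
    (hx : ∀ t ∈ J, ContDiffAt ℝ 2 x t) (hy : ∀ t ∈ J, ContDiffAt ℝ 2 y t)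
    (hJS : ∀ t ∈ J, SteadyJSEq g ζ x y t) {s t : ℝ} (hs : s ∈ J) (ht : t ∈ J) :
    energy g ζ x y t = energy g ζ x y s :=
  eq_of_hasDerivWithinAt_zero hJ (fun r hr =>
    ((hJS r hr).hasDerivAt_energy_zero (hζ r hr) (hx r hr) (hy r hr)).hasDerivWithinAt) hs ht

theorem steadyJS_no_blowup_general {g : ℝ} (hg : 0 ≤ g) {ζ : ℝ × ℝ → ℝ} {x y : ℝ → ℝ}
    {J : Set ℝ} (hJ : J.OrdConnected) (hζ : ∀ t ∈ J, ContDiffAt ℝ 2 ζ (x t, y t))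
    (hx : ∀ t ∈ J, ContDiffAt ℝ 2 x t) (hy : ∀ t ∈ J, ContDiffAt ℝ 2 y t)
    (hJS : ∀ t ∈ J, SteadyJSEq g ζ x y t) {m : ℝ} (hm : ∀ t ∈ J, m ≤ ζ (x t, y t))
    {s t : ℝ} (hs : s ∈ J) (ht : t ∈ J) :
    (deriv x t) ^ 2 + (deriv y t) ^ 2 ≤ 2 * (energy g ζ x y s - g * m) := by
  calc (deriv x t) ^ 2 + (deriv y t) ^ 2
      ≤ 2 * (energy g ζ x y t - g * ζ (x t, y t)) := horizontal_speed_sq_le_two_mul_energy_sub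
    _ = 2 * (energy g ζ x y s - g * ζ (x t, y t)) := by
      rw [energy_eq_of_steadyJSEq hJ hζ hx hy hJS hs ht]
    _ ≤ 2 * (energy g ζ x y s - g * m) := by
      gcongr
      exact hm t ht

/-- (No finite-time blowup for steady surfaces.) If `ζ ≥ m` and
`|∇ζ| ≤ M` everywhere, then along any C² solution of the steady John–Sclavounos
equations on an interval `J` containing `0`, with
`H₀ = g ζ(x₀) + ½|u₀|² + ½(u₀·∇ζ(x₀))²`, the velocity satisfies
`ẋ(t)² + ẏ(t)² ≤ 2(1+M²)(H₀ − g m)` for all `t ∈ J`. -/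
theorem steadyJS_no_blowup
    (g : ℝ) (hg : 0 < g) (ζ : ℝ × ℝ → ℝ) (hζ : ContDiff ℝ 2 ζ)
    (m M : ℝ) (hm : ∀ p : ℝ × ℝ, m ≤ ζ p)
    (hM : ∀ p : ℝ × ℝ, Real.sqrt ((dx ζ p) ^ 2 + (dy ζ p) ^ 2) ≤ M)
    (x y : ℝ → ℝ) (hx : ContDiff ℝ 2 x) (hy : ContDiff ℝ 2 y)
    (J : Set ℝ) (hJ : J.OrdConnected) (h0 : (0 : ℝ) ∈ J)
    (hJS : ∀ t ∈ J, SteadyJSEq g ζ x y t)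
    (H₀ : ℝ)
    (hH₀ : H₀ = g * ζ (x 0, y 0) + (1 / 2) * ((deriv x 0) ^ 2 + (deriv y 0) ^ 2)
      + (1 / 2) * (deriv x 0 * dx ζ (x 0, y 0) + deriv y 0 * dy ζ (x 0, y 0)) ^ 2) :
    ∀ t ∈ J, (deriv x t) ^ 2 + (deriv y t) ^ 2 ≤ 2 * (1 + M ^ 2) * (H₀ - g * m) := by
  intro t ht
  have hv : (deriv x t) ^ 2 + (deriv y t) ^ 2 ≤ 2 * (H₀ - g * m) :=
    hH₀ ▸ steadyJS_no_blowup_general hg.le hJ (fun _ _ => hζ.contDiffAt) (fun _ _ => hx.contDiffAt)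
      (fun _ _ => hy.contDiffAt) hJS (fun _ _ => hm _) h0 ht
  have hH : 0 ≤ H₀ - g * m := by linarith [sq_nonneg (deriv x t), sq_nonneg (deriv y t)]
  linarith [mul_nonneg (sq_nonneg M) hH]

end
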